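/- arXiv:1706.08570 — 3 statements merged into one kernel-verified Lean document; each statement's English description precedes it below -/
import Mathlib

section
/- Let X be a metric space, Δ : X → ℝ a function, and z₀ ∈ ℝ, δ > 0, ε > 0 be such that for all x, y ∈ X with Δ(x) ≥ z₀ and dist(x, y) < ε one has |Δ(x) − Δ(y)| < δ. For z ∈ ℝ write A(z) = {x ∈ X : Δ(x) ≥ z}, A'(z, ε) = {x ∈ A(z) : dist(x, X ∖ A(z)) ≥ ε}, and A''(z, ε) = {x ∈ X : dist(x, A(z)) < ε}. Then for every z ≥ z₀ one has the chain of inclusions A(z + δ) ⊆ A'(z, ε) ⊆ A(z) ⊆ A''(z, ε) ⊆ A(z − δ). -/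
open Metric EMetric Set

/-- `A(z) = {x : Δ(x) ≥ z}`, the superlevel set of `Δ`. -/
def superlevelSet {X : Type*} [MetricSpace X] (Δ : X → ℝ) (z : ℝ) : Set X :=
  {x | z ≤ Δ x}

/-- `A'(z, ε) = {x ∈ A(z) : dist(x, X ∖ A(z)) ≥ ε}`, the set of points of `A(z)` at distance
at least `ε` from its complement (the distance to the empty set being `+∞`). -/
def innerApprox {X : Type*} [MetricSpace X] (Δ : X → ℝ) (z ε : ℝ) : Set X :=
  {x | x ∈ superlevelSet Δ z ∧ ENNReal.ofReal ε ≤ infEdist x (superlevelSet Δ z)ᶜ}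

/-- `A''(z, ε) = {x : dist(x, A(z)) < ε}`, the open `ε`-neighborhood of `A(z)`. -/
def outerApprox {X : Type*} [MetricSpace X] (Δ : X → ℝ) (z ε : ℝ) : Set X :=
  {x | infEdist x (superlevelSet Δ z) < ENNReal.ofReal ε}

/-- If `|Δ(x) − Δ(y)| < δ` whenever `Δ(x) ≥ z₀` and `dist(x, y) < ε`, then for every
`z ≥ z₀` one has the chain of inclusions
`A(z + δ) ⊆ A'(z, ε) ⊆ A(z) ⊆ A''(z, ε) ⊆ A(z − δ)`. -/
theorem superlevel_inclusions {X : Type*} [MetricSpace X] (Δ : X → ℝ)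
    (z₀ δ ε : ℝ) (hδ : 0 < δ) (hε : 0 < ε)
    (hunif : ∀ x y : X, z₀ ≤ Δ x → dist x y < ε → |Δ x - Δ y| < δ) :
    ∀ z : ℝ, z₀ ≤ z →
      superlevelSet Δ (z + δ) ⊆ innerApprox Δ z ε ∧
      innerApprox Δ z ε ⊆ superlevelSet Δ z ∧
      superlevelSet Δ z ⊆ outerApprox Δ z ε ∧
      outerApprox Δ z ε ⊆ superlevelSet Δ (z - δ) := by
  intro z hz
  refine ⟨?_, fun x hx => hx.1, ?_, ?_⟩
  · intro x hx
    have hx' : z + δ ≤ Δ x := hx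
    refine ⟨show z ≤ Δ x by linarith, ?_⟩
    refine le_infEDist.2 fun y hy => ?_
    by_contra hlt
    rw [not_le, edist_dist, ENNReal.ofReal_lt_ofReal_iff hε] at hlt
    have h := abs_lt.1 (hunif x y (by linarith) hlt)
    exact hy (show z ≤ Δ y by linarith [h.2])
  · intro x hx
    show infEDist x (superlevelSet Δ z) < ENNReal.ofReal ε
    rw [infEDist_zero_of_mem hx]
    exact ENNReal.ofReal_pos.2 hε
  · intro x hx
    obtain ⟨y, hy, hlt⟩ := infEDist_lt_iff.1 hx
    have hy' : z ≤ Δ y := hy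
    rw [edist_comm, edist_dist, ENNReal.ofReal_lt_ofReal_iff hε] at hlt
    have h := abs_lt.1 (hunif y x (by linarith) hlt)
    show z - δ ≤ Δ x
    linarith [h.2]
end

section
/- Let X be a metric space with a Borel probability measure μ, and let Δ : X → ℝ be measurable. Write Φ_Δ(z) = μ({x : Δ(x) ≥ z}), A(z) = {x ∈ X : Δ(x) ≥ z}, A'(z, ε) = {x ∈ A(z) : dist(x, X ∖ A(z)) ≥ ε}, A''(z, ε) = {x ∈ X : dist(x, A(z)) < ε}. Suppose z₀ ∈ ℝ, c > 0, δ > 0 are such that Φ_Δ(z) ≥ c · Φ_Δ(z − δ) for all z ≥ z₀, and suppose ε > 0 is such that for all x, y ∈ X with Δ(x) ≥ z₀ and dist(x, y) < ε one has |Δ(x) − Δ(y)| < δ. Then for every z ≥ z₀: c · μ(A(z)) ≤ μ(A'(z, ε)) ≤ μ(A''(z, ε)) ≤ (1/c) · μ(A(z)). -/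
open Metric EMetric Set MeasureTheory

/-- If `Δ` satisfies the distance-like decay condition `Φ_Δ(z) ≥ c Φ_Δ(z − δ)` for `z ≥ z₀`
(where `Φ_Δ(z) = μ(A(z))`) and is uniformly continuous on `Δ⁻¹([z₀, ∞))`, then for every
`z ≥ z₀` one has `c μ(A(z)) ≤ μ(A'(z, ε)) ≤ μ(A''(z, ε)) ≤ (1/c) μ(A(z))`. -/
theorem measure_inner_outer_approx
    {X : Type*} [MetricSpace X] [MeasurableSpace X] [BorelSpace X]
    (μ : Measure X) [IsProbabilityMeasure μ]
    (Δ : X → ℝ) (hΔ : Measurable Δ)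
    (z₀ c δ ε : ℝ) (hc : 0 < c) (hδ : 0 < δ) (hε : 0 < ε)
    (hDL : ∀ z : ℝ, z₀ ≤ z →
      ENNReal.ofReal c * μ (superlevelSet Δ (z - δ)) ≤ μ (superlevelSet Δ z))
    (hunif : ∀ x y : X, z₀ ≤ Δ x → dist x y < ε → |Δ x - Δ y| < δ) :
    ∀ z : ℝ, z₀ ≤ z →
      ENNReal.ofReal c * μ (superlevelSet Δ z) ≤ μ (innerApprox Δ z ε) ∧
      μ (innerApprox Δ z ε) ≤ μ (outerApprox Δ z ε) ∧
      μ (outerApprox Δ z ε) ≤ ENNReal.ofReal (1 / c) * μ (superlevelSet Δ z) := by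
  intro z hz
  refine ⟨?_, ?_, ?_⟩
  · have h := hDL (z + δ) (by linarith)
    rw [add_sub_cancel_right] at h
    refine h.trans (measure_mono ?_)
    intro x hx
    have hx' : z + δ ≤ Δ x := hx
    refine ⟨show z ≤ Δ x by linarith, ?_⟩
    refine le_infEDist.2 fun y hy => ?_
    have hy' : Δ y < z := not_le.1 hy
    rw [edist_dist]
    refine ENNReal.ofReal_le_ofReal ?_
    by_contra hlt
    have h2 := (abs_lt.1 (hunif x y (by linarith) (not_le.1 hlt))).2
    linarith
  · refine measure_mono ?_
    rintro x ⟨hx, -⟩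
    change infEDist x (superlevelSet Δ z) < ENNReal.ofReal ε
    rw [infEDist_zero_of_mem hx]
    exact ENNReal.ofReal_pos.2 hε
  · have hsub : outerApprox Δ z ε ⊆ superlevelSet Δ (z - δ) := by
      intro x hx
      obtain ⟨y, hy, hxy⟩ := infEDist_lt_iff.1 hx
      have hy' : z ≤ Δ y := hy
      rw [edist_comm, edist_dist, ENNReal.ofReal_lt_ofReal_iff hε] at hxy
      have h2 := (abs_lt.1 (hunif y x (by linarith) hxy)).2
      change z - δ ≤ Δ x
      linarith
    refine (measure_mono hsub).trans ?_
    calc μ (superlevelSet Δ (z - δ))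
        = ENNReal.ofReal (1 / c) * (ENNReal.ofReal c * μ (superlevelSet Δ (z - δ))) := by
          rw [← mul_assoc, ← ENNReal.ofReal_mul (by positivity), one_div,
            inv_mul_cancel₀ hc.ne', ENNReal.ofReal_one, one_mul]
      _ ≤ _ := mul_le_mul_right (hDL z hz) _
end

section
/- Let (X, μ) be a probability space, {T_t : t ∈ ℕ} a sequence of measurable maps X → X, and {A_t : t ∈ ℕ} a sequence of measurable subsets of X. Let c ∈ (0, 1] and {Φ_t : t ∈ ℕ} be positive reals with ∑_{t=1}^{∞} Φ_t = ∞. Suppose for each t there are nonnegative integrable functions h'_t, h''_t on X with h'_t ≤ 1_{A_t} ≤ h''_t pointwise and c · Φ_t ≤ ∫_X h'_t dμ ≤ ∫_X h''_t dμ ≤ (1/c) · Φ_t, and suppose x ∈ X is a point such that lim_{N→∞} (∑_{t=1}^{N} h'_t(T_t x)) / (∑_{t=1}^{N} ∫ h'_t dμ) = 1 and lim_{N→∞} (∑_{t=1}^{N} h''_t(T_t x)) / (∑_{t=1}^{N} ∫ h''_t dμ) = 1. Then c ≤ liminf_{N→∞} #\{1 ≤ t ≤ N : T_t x ∈ A_t\}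 / (∑_{t=1}^{N} Φ_t) and limsup_{N→∞} #\{1 ≤ t ≤ N : T_t x ∈ A_t\} / (∑_{t=1}^{N} Φ_t) ≤ 1/c. In particular, T_t x ∈ A_t for infinitely many t ∈ ℕ. -/
open MeasureTheory Finset Filter Set
open scoped Topology

open Classical in
/-- The deduction of the Borel–Cantelli statement from the smooth sandwich
`h'_t ≤ 1_{A_t} ≤ h''_t` with `c Φ_t ≤ ∫ h'_t ≤ ∫ h''_t ≤ Φ_t / c` and the almost-everywhere
averaging of `h'` and `h''`: if `∑ Φ_t = ∞` and at the point `x` both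
`∑_{t≤N} h'_t(T_t x) / ∑_{t≤N} ∫ h'_t → 1` and `∑_{t≤N} h''_t(T_t x) / ∑_{t≤N} ∫ h''_t → 1`,
then `c ≤ liminf #{1 ≤ t ≤ N : T_t x ∈ A_t} / ∑_{t=1}^N Φ_t`,
`limsup #{1 ≤ t ≤ N : T_t x ∈ A_t} / ∑_{t=1}^N Φ_t ≤ 1/c`, and in particular
`T_t x ∈ A_t` for infinitely many `t`. -/
theorem borel_cantelli_from_sandwich
    {X : Type*} [MeasurableSpace X] (μ : Measure X) [IsProbabilityMeasure μ]
    (T : ℕ → X → X) (hT : ∀ t, Measurable (T t))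
    (A : ℕ → Set X) (hA : ∀ t, MeasurableSet (A t))
    (c : ℝ) (hc : 0 < c) (hc1 : c ≤ 1)
    (Φ : ℕ → ℝ) (hΦpos : ∀ t, 0 < Φ t)
    (hΦdiv : Tendsto (fun N => ∑ t ∈ Icc 1 N, Φ t) atTop atTop)
    (h' h'' : ℕ → X → ℝ)
    (h'pos : ∀ t x, 0 ≤ h' t x) (h''pos : ∀ t x, 0 ≤ h'' t x)
    (h'int : ∀ t, Integrable (h' t) μ) (h''int : ∀ t, Integrable (h'' t) μ)
    (hsandwich : ∀ t x, h' t x ≤ (A t).indicator 1 x ∧ (A t).indicator 1 x ≤ h'' t x)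
    (hnorms : ∀ t, c * Φ t ≤ ∫ x, h' t x ∂μ ∧
      (∫ x, h' t x ∂μ) ≤ ∫ x, h'' t x ∂μ ∧ (∫ x, h'' t x ∂μ) ≤ (1 / c) * Φ t)
    (x : X)
    (hx' : Tendsto
      (fun N => (∑ t ∈ Icc 1 N, h' t (T t x)) / ∑ t ∈ Icc 1 N, ∫ y, h' t y ∂μ)
      atTop (𝓝 1))
    (hx'' : Tendsto
      (fun N => (∑ t ∈ Icc 1 N, h'' t (T t x)) / ∑ t ∈ Icc 1 N, ∫ y, h'' t y ∂μ)
      atTop (𝓝 1)) :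
    c ≤ liminf (fun N =>
        (((Finset.Icc 1 N).filter fun t => T t x ∈ A t).card : ℝ) / ∑ t ∈ Icc 1 N, Φ t) atTop ∧
    limsup (fun N =>
        (((Finset.Icc 1 N).filter fun t => T t x ∈ A t).card : ℝ) / ∑ t ∈ Icc 1 N, Φ t) atTop ≤
      1 / c ∧
    {t : ℕ | T t x ∈ A t}.Infinite := by
  set S : ℕ → ℝ := fun N => ∑ t ∈ Icc 1 N, Φ t with hS
  set C : ℕ → ℝ := fun N => (((Finset.Icc 1 N).filter fun t => T t x ∈ A t).card : ℝ) with hC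
  have hCeq : ∀ N, C N = ∑ t ∈ Icc 1 N, (A t).indicator (1 : X → ℝ) (T t x) := by
    intro N
    simp only [hC, Finset.card_filter, Nat.cast_sum, Set.indicator_apply]
    refine Finset.sum_congr rfl fun t _ => ?_
    split_ifs <;> simp
  have hPC : ∀ N, ∑ t ∈ Icc 1 N, h' t (T t x) ≤ C N := fun N => by
    rw [hCeq]
    exact Finset.sum_le_sum fun t _ => (hsandwich t (T t x)).1
  have hCQ : ∀ N, C N ≤ ∑ t ∈ Icc 1 N, h'' t (T t x) := fun N => by
    rw [hCeq]
    exact Finset.sum_le_sum fun t _ => (hsandwich t (T t x)).2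
  have hP0 : ∀ N, 0 ≤ ∑ t ∈ Icc 1 N, h' t (T t x) := fun N =>
    Finset.sum_nonneg fun t _ => h'pos t _
  have hI' : ∀ N, c * S N ≤ ∑ t ∈ Icc 1 N, ∫ y, h' t y ∂μ := fun N => by
    simp only [hS]
    rw [Finset.mul_sum]
    exact Finset.sum_le_sum fun t _ => (hnorms t).1
  have hI : ∀ N, ∑ t ∈ Icc 1 N, ∫ y, h' t y ∂μ ≤ ∑ t ∈ Icc 1 N, ∫ y, h'' t y ∂μ := fun N =>
    Finset.sum_le_sum fun t _ => (hnorms t).2.1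
  have hI'' : ∀ N, ∑ t ∈ Icc 1 N, ∫ y, h'' t y ∂μ ≤ (1 / c) * S N := fun N => by
    simp only [hS]
    rw [Finset.mul_sum]
    exact Finset.sum_le_sum fun t _ => (hnorms t).2.2
  have hSpos : ∀ᶠ N in atTop, 0 < S N := hΦdiv.eventually_gt_atTop 0
  have hlow : ∀ᶠ N in atTop, c * ((∑ t ∈ Icc 1 N, h' t (T t x)) /
      ∑ t ∈ Icc 1 N, ∫ y, h' t y ∂μ) ≤ C N / S N := by
    filter_upwards [hSpos] with N hN
    have h1 : 0 < c * S N := mul_pos hc hN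
    calc _ ≤ c * (C N / (c * S N)) := by
          have := hPC N
          have := hI' N
          have := (hP0 N).trans (hPC N)
          gcongr
      _ = C N / S N := by field_simp
  have hup : ∀ᶠ N in atTop, C N / S N ≤ (1 / c) * ((∑ t ∈ Icc 1 N, h'' t (T t x)) /
      ∑ t ∈ Icc 1 N, ∫ y, h'' t y ∂μ) := by
    filter_upwards [hSpos] with N hN
    have h1 : 0 < c * S N := mul_pos hc hN
    have h2 := h1.trans_le ((hI' N).trans (hI N))
    calc C N / S N = (1 / c) * (C N / ((1 / c) * S N)) := by field_simp
      _ ≤ _ := by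
          have := hCQ N
          have := hI'' N
          have := ((hP0 N).trans (hPC N)).trans (hCQ N)
          gcongr
  have hl := hx'.const_mul c
  have hu := hx''.const_mul (1 / c)
  rw [mul_one] at hl hu
  have hba : IsBoundedUnder (· ≤ ·) atTop (fun N => C N / S N) :=
    hu.isBoundedUnder_le.mono_le hup
  have hbb : IsBoundedUnder (· ≥ ·) atTop (fun N => C N / S N) :=
    hl.isBoundedUnder_ge.mono_ge hlow
  refine ⟨?_, ?_, ?_⟩
  · rw [← hl.liminf_eq]
    exact liminf_le_liminf hlow hl.isBoundedUnder_ge hba.isCoboundedUnder_ge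
  · rw [← hu.limsup_eq]
    exact limsup_le_limsup hup hbb.isCoboundedUnder_le hu.isBoundedUnder_le
  · intro hfin
    have hK : ∀ N, C N ≤ (hfin.toFinset.card : ℝ) := fun N => by
      simp only [hC]
      exact_mod_cast Finset.card_le_card fun t ht => by
        simpa using (Finset.mem_filter.1 ht).2
    have h0 : Tendsto (fun N => (hfin.toFinset.card : ℝ) / S N) atTop (𝓝 0) :=
      hΦdiv.const_div_atTop _
    have : c ≤ 0 := by
      refine le_of_tendsto_of_tendsto hl h0 ?_
      filter_upwards [hSpos, hlow] with N hN h1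
      exact h1.trans (div_le_div_of_nonneg_right (hK N) hN.le)
    linarith
end
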